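/- Let N be a positive natural number and for each i ∈ {1,…,N} let V_i and F_i be finite-dimensional real vector spaces, and let F be a further finite-dimensional real vector space. Suppose for each i that D_i ⊆ V_i × V_i* × F_i × F_i* is a Dirac structure (with respect to the summed duality pairing), and that D_I ⊆ (∏_i (F_i × F_i*)) × F × F* is a Dirac structure (the interconnection structure). Define D ⊆ (∏_i V_i) × (∏_i V_i*) × F × F* as the set of tuples ((v_i)_i, (α_i)_i, f, e) for which there exist (φ_i)_i ∈ ∏_i F_i and (ε_i)_i ∈ ∏_i F_i* such that (v_i, α_i, -φ_i, ε_i) ∈ D_i for every i and ((φ_i, ε_i)_i, f, e) ∈ D_I. Then D is a Dirac structure on (∏_i V_i) × F; hence the power-preserving interconnection of N port-Hamiltonian systems through an interconnection Dirac structure is again a port-Hamiltonian system, with Dirac structure D and Hamiltonian H := Σ_i H_i. -/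

import Mathlib

open Finset

/-!
Let `R` be the product of the Dirac structures of the systems and `S` the interconnection structure,
and call `z - z'` the mismatch of `(x, z) ∈ R` and `(z', y) ∈ S` at the shared port. A functional on
`R × S` that vanishes wherever the mismatch does factors through the mismatch. If `p = (x, y)` is
orthogonal to the interconnection, pairing with `p` is such a functional, and, the shared port being
finite-dimensional, it is the pairing of the mismatch with a single port element `z`. Since `R` and
`S` are their own orthogonals, this says exactly that `(x, z) ∈ R` and `(z, y) ∈ S`.

The sign in `f = -φ` turns the pairing on the shared port of the systems into its negative, so that
the contributions of that port to the total power cancel.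
-/

/-- A set that is its own orthogonal with respect to a scalar-valued pairing `b`: a Dirac structure
when `b` is a sum of duality pairings of flow-effort spaces. The pairing is an arbitrary function
rather than a bilinear form, so that it can be written out on any nesting of products. -/
def IsSelfOrthogonal {K E : Type*} [AddCommMonoid K] (b : E → E → K) (D : Set E) : Prop :=
  D = {p | ∀ q ∈ D, b p q = 0}

namespace IsSelfOrthogonal

section Pairing

variable {K E E' : Type*} [AddCommMonoid K]

theorem mem_iff {b : E → E → K} {D : Set E} (hD : IsSelfOrthogonal b D) {p : E} :
    p ∈ D ↔ ∀ q ∈ D, b p q = 0 :=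
  Set.ext_iff.1 hD p

theorem preimage_iff {b : E' → E' → K} {D : Set E'} {e : E → E'} (he : Function.Surjective e) :
    IsSelfOrthogonal (fun x y ↦ b (e x) (e y)) (e ⁻¹' D) ↔ IsSelfOrthogonal b D := by
  simp only [IsSelfOrthogonal, Set.ext_iff, Set.mem_preimage, Set.mem_ofPred_eq, he.forall]

theorem pi {ι : Type*} [Fintype ι] {E : ι → Type*} [∀ i, Zero (E i)]
    {b : ∀ i, E i → E i → K} {D : ∀ i, Set (E i)} (hD : ∀ i, IsSelfOrthogonal (b i) (D i))
    (zero_left : ∀ i x, b i 0 x = 0) (zero_right : ∀ i x, b i x 0 = 0) :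
    IsSelfOrthogonal (fun p q ↦ ∑ i, b i (p i) (q i)) (Set.univ.pi D) := by
  classical
  have zero_mem i : 0 ∈ D i := (hD i).mem_iff.2 fun q _ ↦ zero_left i q
  ext p
  refine ⟨fun hp q hq ↦ Finset.sum_eq_zero fun i _ ↦
    (hD i).mem_iff.1 (hp i trivial) _ (hq i trivial), fun hp i _ ↦ (hD i).mem_iff.2 fun x hx ↦ ?_⟩
  have single_mem : Pi.single i x ∈ Set.univ.pi D := fun j _ ↦ by
    obtain rfl | hj := eq_or_ne j i
    · rwa [Pi.single_eq_same]
    · rw [Pi.single_eq_of_ne hj]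
      exact zero_mem j
  calc b i (p i) x
      = b i (p i) (Pi.single i x i) := by rw [Pi.single_eq_same]
    _ = ∑ j, b j (p j) (Pi.single i x j) :=
      (Fintype.sum_eq_single (f := fun j ↦ b j (p j) (Pi.single i x j)) i fun j hj ↦ by
        rw [Pi.single_eq_of_ne hj, zero_right]).symm
    _ = 0 := hp _ single_mem

end Pairing

/-- A self-orthogonal set of a bilinear form as a submodule, so that linear functionals can be
defined on it. -/
def toSubmodule {K E : Type*} [CommSemiring K] [AddCommMonoid E] [Module K E]
    {B : LinearMap.BilinForm K E} {D : Set E} (hD : IsSelfOrthogonal (fun p q ↦ B p q) D) :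
    Submodule K E where
  carrier := D
  add_mem' hp hp' := hD.mem_iff.2 fun q hq ↦ by
    rw [LinearMap.BilinForm.add_left, hD.mem_iff.1 hp q hq, hD.mem_iff.1 hp' q hq, add_zero]
  zero_mem' := hD.mem_iff.2 fun q _ ↦ LinearMap.BilinForm.zero_left q
  smul_mem' c p hp := hD.mem_iff.2 fun q hq ↦ by
    rw [LinearMap.BilinForm.smul_left, hD.mem_iff.1 hp q hq, mul_zero]

end IsSelfOrthogonal

section Composition

variable {K X P Y : Type*} [Field K] [AddCommGroup X] [Module K X] [AddCommGroup P] [Module K P]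
  [AddCommGroup Y] [Module K Y]

theorem exists_dual_of_eq_on_matching {L : Submodule K (X × P)} {M : Submodule K (P × Y)}
    {g : Module.Dual K X} {h : Module.Dual K Y}
    (hgh : ∀ x z y, (x, z) ∈ L → (z, y) ∈ M → g x = h y) :
    ∃ f : Module.Dual K P, (∀ r ∈ L, f r.2 = g r.1) ∧ ∀ s ∈ M, f s.1 = h s.2 := by
  let mismatch : L × M →ₗ[K] P :=
    (LinearMap.snd K X P ∘ₗ L.subtype).coprod (-(LinearMap.fst K P Y ∘ₗ M.subtype))
  let difference : Module.Dual K (L × M) :=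
    (g ∘ₗ LinearMap.fst K X P ∘ₗ L.subtype).coprod (-(h ∘ₗ LinearMap.snd K P Y ∘ₗ M.subtype))
  have difference_mem : difference ∈ (LinearMap.ker mismatch).dualAnnihilator := by
    rw [Submodule.mem_dualAnnihilator]
    rintro ⟨⟨⟨x, z⟩, hr⟩, ⟨⟨z', y⟩, hs⟩⟩ hzz'
    obtain rfl : z = z' := by simpa [mismatch, ← sub_eq_add_neg, sub_eq_zero] using hzz'
    simpa [difference, ← sub_eq_add_neg, sub_eq_zero] using hgh x z y hr hs
  rw [← LinearMap.range_dualMap_eq_dualAnnihilator_ker] at difference_mem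
  obtain ⟨f, hf⟩ := difference_mem
  have factor (w) : f (mismatch w) = difference w := LinearMap.congr_fun hf w
  refine ⟨f, fun r hr ↦ ?_, fun s hs ↦ ?_⟩
  · simpa [mismatch, difference] using factor (⟨r, hr⟩, 0)
  · simpa [mismatch, difference] using factor (0, ⟨s, hs⟩)

theorem IsSelfOrthogonal.comp {BX : LinearMap.BilinForm K X} {BP : LinearMap.BilinForm K P}
    {BY : LinearMap.BilinForm K Y} (hBP : Function.Surjective BP)
    {R : Set (X × P)} (hR : IsSelfOrthogonal (fun p q ↦ BX p.1 q.1 - BP p.2 q.2) R)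
    {S : Set (P × Y)} (hS : IsSelfOrthogonal (fun p q ↦ BP p.1 q.1 + BY p.2 q.2) S) :
    IsSelfOrthogonal (fun p q ↦ BX p.1 q.1 + BY p.2 q.2)
      {p : X × Y | ∃ z, (p.1, z) ∈ R ∧ (z, p.2) ∈ S} := by
  ext ⟨x, y⟩
  constructor
  · rintro ⟨z, hxz, hzy⟩ ⟨x', y'⟩ ⟨z', hxz', hzy'⟩
    have hx : BX x x' - BP z z' = 0 := hR.mem_iff.1 hxz _ hxz'
    have hy : BP z z' + BY y y' = 0 := hS.mem_iff.1 hzy _ hzy'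
    linear_combination hx + hy
  · intro hp
    let L : Submodule K (X × P) := IsSelfOrthogonal.toSubmodule (B :=
      BX.compl₁₂ (LinearMap.fst K X P) (LinearMap.fst K X P) -
        BP.compl₁₂ (LinearMap.snd K X P) (LinearMap.snd K X P)) hR
    let M : Submodule K (P × Y) := IsSelfOrthogonal.toSubmodule (B :=
      BP.compl₁₂ (LinearMap.fst K P Y) (LinearMap.fst K P Y) +
        BY.compl₁₂ (LinearMap.snd K P Y) (LinearMap.snd K P Y)) hS
    obtain ⟨f, hfL, hfM⟩ := exists_dual_of_eq_on_matching (L := L) (M := M) (g := BX x) (h := -BY y)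
      fun x' z y' hr hs ↦ eq_neg_of_add_eq_zero_left (hp (x', y') ⟨z, hr, hs⟩)
    obtain ⟨z, rfl⟩ := hBP f
    exact ⟨z, hR.mem_iff.2 fun r hr ↦ sub_eq_zero.2 (hfL r hr).symm,
      hS.mem_iff.2 fun s hs ↦ eq_neg_iff_add_eq_zero.1 (hfM s hs)⟩

end Composition

/-- The symmetric duality pairing on the flow-effort space `W × W*` of a port. It is Mathlib's
`LinearMap.dualProd`, which puts the dual factor first, with the two factors exchanged. -/
def flowEffortForm (K W : Type*) [CommSemiring K] [AddCommMonoid W] [Module K W] :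
    LinearMap.BilinForm K (W × Module.Dual K W) :=
  (LinearMap.dualProd K W).compl₁₂ (LinearEquiv.prodComm K W (Module.Dual K W)).toLinearMap
    (LinearEquiv.prodComm K W (Module.Dual K W)).toLinearMap

theorem flowEffortForm_apply {K W : Type*} [CommSemiring K] [AddCommMonoid W] [Module K W]
    (p q : W × Module.Dual K W) : flowEffortForm K W p q = p.2 q.1 + q.2 p.1 :=
  add_comm _ _

theorem flowEffortForm_surjective (K W : Type*) [CommSemiring K] [AddCommMonoid W] [Module K W]
    [Module.IsReflexive K W] : Function.Surjective (flowEffortForm K W) := by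
  intro f
  obtain ⟨w, hw⟩ := (Module.bijective_dual_eval K W).surjective (f ∘ₗ LinearMap.inr K W _)
  refine ⟨(w, f ∘ₗ LinearMap.inl K W _), LinearMap.ext fun q ↦ ?_⟩
  have eval_w : q.2 w = f (0, q.2) := LinearMap.congr_fun hw q.2
  calc flowEffortForm K W (w, f ∘ₗ LinearMap.inl K W _) q
      = f (q.1, 0) + f (0, q.2) := by rw [flowEffortForm_apply, eval_w]; rfl
    _ = f q := by rw [← map_add, Prod.mk_add_mk, add_zero, zero_add]

section PiForm

variable {K ι : Type*} [CommSemiring K] [Fintype ι] {E : ι → Type*} [∀ i, AddCommMonoid (E i)]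
  [∀ i, Module K (E i)]

/-- The orthogonal sum of a finite family of bilinear forms: the summed pairing of several ports. -/
def piForm (B : ∀ i, LinearMap.BilinForm K (E i)) : LinearMap.BilinForm K (∀ i, E i) :=
  ∑ i, (B i).compl₁₂ (LinearMap.proj i) (LinearMap.proj i)

theorem piForm_apply (B : ∀ i, LinearMap.BilinForm K (E i)) (p q : ∀ i, E i) :
    piForm B p q = ∑ i, B i (p i) (q i) := by
  simp only [piForm, LinearMap.sum_apply, LinearMap.compl₁₂_apply, LinearMap.proj_apply]

theorem piForm_surjective {B : ∀ i, LinearMap.BilinForm K (E i)}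
    (hB : ∀ i, Function.Surjective (B i)) : Function.Surjective (piForm B) := by
  classical
  intro f
  choose z hz using fun i ↦ hB i (f ∘ₗ LinearMap.single K E i)
  refine ⟨z, LinearMap.ext fun q ↦ ?_⟩
  calc piForm B z q
      = ∑ i, f (Pi.single i (q i)) := by
        simp only [piForm_apply, hz, LinearMap.comp_apply, LinearMap.single_apply]
    _ = f q := by rw [← map_sum, Finset.univ_sum_single]

end PiForm

theorem IsSelfOrthogonal.pi_neg_flow {K ι : Type*} [CommRing K] [Fintype ι] {V Fp : ι → Type*}
    [∀ i, AddCommGroup (V i)] [∀ i, Module K (V i)]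
    [∀ i, AddCommGroup (Fp i)] [∀ i, Module K (Fp i)]
    {Ds : ∀ i, Set (V i × Module.Dual K (V i) × Fp i × Module.Dual K (Fp i))}
    (hDs : ∀ i, IsSelfOrthogonal (fun p q ↦
      p.2.1 q.1 + q.2.1 p.1 + p.2.2.2 q.2.2.1 + q.2.2.2 p.2.2.1) (Ds i)) :
    IsSelfOrthogonal
      (fun p q ↦ piForm (fun i ↦ flowEffortForm K (V i)) p.1 q.1 -
        piForm (fun i ↦ flowEffortForm K (Fp i)) p.2 q.2)
      {x : (∀ i, V i × Module.Dual K (V i)) × ∀ i, Fp i × Module.Dual K (Fp i) |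
        ∀ i, ((x.1 i).1, (x.1 i).2, -(x.2 i).1, (x.2 i).2) ∈ Ds i} := by
  let systemPorts (x : (∀ i, V i × Module.Dual K (V i)) × ∀ i, Fp i × Module.Dual K (Fp i))
      (i : ι) : V i × Module.Dual K (V i) × Fp i × Module.Dual K (Fp i) :=
    ((x.1 i).1, (x.1 i).2, -(x.2 i).1, (x.2 i).2)
  have systemPorts_surjective : Function.Surjective systemPorts := fun y ↦
    ⟨(fun i ↦ ((y i).1, (y i).2.1), fun i ↦ (-(y i).2.2.1, (y i).2.2.2)), by simp [systemPorts]⟩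
  convert (preimage_iff systemPorts_surjective).2 (pi hDs (by simp) (by simp)) using 1
  · funext x y
    simp only [systemPorts, piForm_apply, flowEffortForm_apply, map_neg, ← Finset.sum_sub_distrib]
    exact Finset.sum_congr rfl fun i _ ↦ by ring
  · ext x
    exact Set.mem_univ_pi.symm

theorem interconnection_of_PHS_is_PHS_general {K ι : Type*} [Field K] [Fintype ι]
    {V Fp : ι → Type*}
    [∀ i, AddCommGroup (V i)] [∀ i, Module K (V i)]
    [∀ i, AddCommGroup (Fp i)] [∀ i, Module K (Fp i)] [∀ i, FiniteDimensional K (Fp i)]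
    {F : Type*} [AddCommGroup F] [Module K F]
    {Ds : ∀ i, Set (V i × Module.Dual K (V i) × Fp i × Module.Dual K (Fp i))}
    (hDs : ∀ i, IsSelfOrthogonal (fun p q ↦
      p.2.1 q.1 + q.2.1 p.1 + p.2.2.2 q.2.2.1 + q.2.2.2 p.2.2.1) (Ds i))
    {DI : Set ((∀ i, Fp i × Module.Dual K (Fp i)) × F × Module.Dual K F)}
    (hDI : IsSelfOrthogonal (fun p q ↦
      (∑ i, ((p.1 i).2 (q.1 i).1 + (q.1 i).2 (p.1 i).1)) + p.2.2 q.2.1 + q.2.2 p.2.1) DI) :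
    IsSelfOrthogonal
      (fun p q ↦ (∑ i, (p.2.1 i (q.1 i) + q.2.1 i (p.1 i))) + p.2.2.2 q.2.2.1 + q.2.2.2 p.2.2.1)
      {p : (∀ i, V i) × (∀ i, Module.Dual K (V i)) × F × Module.Dual K F |
        ∃ (φ : ∀ i, Fp i) (ε : ∀ i, Module.Dual K (Fp i)),
          (∀ i, (p.1 i, p.2.1 i, -φ i, ε i) ∈ Ds i) ∧
            ((fun i ↦ (φ i, ε i)), p.2.2.1, p.2.2.2) ∈ DI} := by
  have interconnection : IsSelfOrthogonal (fun p q ↦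
      piForm (fun i ↦ flowEffortForm K (Fp i)) p.1 q.1 + flowEffortForm K F p.2 q.2) DI := by
    simpa only [piForm_apply, flowEffortForm_apply, add_assoc] using hDI
  have composite := (IsSelfOrthogonal.pi_neg_flow hDs).comp
    (piForm_surjective fun i ↦ flowEffortForm_surjective K (Fp i)) interconnection
  let externalPorts (x : (∀ i, V i × Module.Dual K (V i)) × F × Module.Dual K F) :
      (∀ i, V i) × (∀ i, Module.Dual K (V i)) × F × Module.Dual K F :=
    (fun i ↦ (x.1 i).1, fun i ↦ (x.1 i).2, x.2)
  have externalPorts_surjective : Function.Surjective externalPorts := fun y ↦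
    ⟨(fun i ↦ (y.1 i, y.2.1 i), y.2.2), rfl⟩
  refine (IsSelfOrthogonal.preimage_iff externalPorts_surjective).1 ?_
  convert composite using 1
  · funext x y
    simp only [externalPorts, piForm_apply, flowEffortForm_apply, add_assoc]
  · ext x
    exact ⟨fun ⟨φ, ε, hsystems, hports⟩ ↦ ⟨fun i ↦ (φ i, ε i), hsystems, hports⟩,
      fun ⟨z, hsystems, hports⟩ ↦ ⟨fun i ↦ (z i).1, fun i ↦ (z i).2, hsystems, hports⟩⟩

/-- The power-preserving interconnection of `N` port-Hamiltonian systems, with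
Dirac structures `Ds i ⊆ V_i × V_i* × F_i × F_i*`, through an interconnection
Dirac structure `DI ⊆ (∏ i, F_i × F_i*) × F × F*`, is again a Dirac structure
on `(∏ i, V_i) × F` (hence defines a port-Hamiltonian system with Hamiltonian
`H = Σ_i H_i`). -/
theorem interconnection_of_PHS_is_PHS
    (N : ℕ) (hN : 0 < N)
    (V Fp : Fin N → Type*)
    [∀ i, AddCommGroup (V i)] [∀ i, Module ℝ (V i)] [∀ i, FiniteDimensional ℝ (V i)]
    [∀ i, AddCommGroup (Fp i)] [∀ i, Module ℝ (Fp i)] [∀ i, FiniteDimensional ℝ (Fp i)]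
    (F : Type*) [AddCommGroup F] [Module ℝ F] [FiniteDimensional ℝ F]
    (Ds : ∀ i, Set (V i × Module.Dual ℝ (V i) × Fp i × Module.Dual ℝ (Fp i)))
    (hDs : ∀ i, Ds i = {p | ∀ q ∈ Ds i,
        p.2.1 q.1 + q.2.1 p.1 + p.2.2.2 q.2.2.1 + q.2.2.2 p.2.2.1 = 0})
    (DI : Set ((∀ i, Fp i × Module.Dual ℝ (Fp i)) × F × Module.Dual ℝ F))
    (hDI : DI = {p | ∀ q ∈ DI,
        (∑ i, ((p.1 i).2 (q.1 i).1 + (q.1 i).2 (p.1 i).1)) +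
          p.2.2 q.2.1 + q.2.2 p.2.1 = 0}) :
    letI D : Set ((∀ i, V i) × (∀ i, Module.Dual ℝ (V i)) × F × Module.Dual ℝ F) :=
      {p | ∃ (φ : ∀ i, Fp i) (ε : ∀ i, Module.Dual ℝ (Fp i)),
        (∀ i, (p.1 i, p.2.1 i, -φ i, ε i) ∈ Ds i) ∧
          ((fun i => (φ i, ε i)), p.2.2.1, p.2.2.2) ∈ DI}
    D = {p | ∀ q ∈ D,
        (∑ i, (p.2.1 i (q.1 i) + q.2.1 i (p.1 i))) +
          p.2.2.2 q.2.2.1 + q.2.2.2 p.2.2.1 = 0} :=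
  interconnection_of_PHS_is_PHS_general hDs hDI
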